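/- arXiv:2509.06416 — 4 statements merged into one kernel-verified Lean document; each statement's English description precedes it below -/
import Mathlib

section
/- Let (X, f_{1,∞}) be an NDS and n ∈ ℕ. Then f_{1,∞} is multi-transitive if and only if its n-th iterate f_{1,∞}^{[n]} is multi-transitive. -/
open Set Filter

section NDSDefs

variable {X : Type*}

/-- `nComp f i n` is the composition `f (i+n-1) ∘ ⋯ ∘ f (i+1) ∘ f i`.
Here `f` is the 0-indexed sequence of maps of the NDS (so `f 0` is the paper's `f₁`),
and `nComp f 0 n` is the paper's `f₁ⁿ`. -/
def nComp (f : ℕ → X → X) (i : ℕ) : ℕ → X → X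
  | 0 => id
  | n + 1 => f (i + n) ∘ nComp f i n

/-- The `k`-th iterate NDS `f^{[k]}`: its `n`-th map (0-indexed) is `f_{kn+1}^{k}`
in the paper's notation, i.e. the composition of `k` maps of `f` starting at index `k*n`. -/
def iterNDS (f : ℕ → X → X) (k : ℕ) : ℕ → X → X :=
  fun n => nComp f (k * n) k

/-- The product NDS `f^{[a]} = f^{[a 0]} × ⋯ × f^{[a (r-1)]}` on `Fin r → X`
for a vector `a : Fin r → ℕ`. -/
def vecIter (f : ℕ → X → X) {r : ℕ} (a : Fin r → ℕ) : ℕ → (Fin r → X) → Fin r → X :=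
  fun n x i => iterNDS f (a i) n (x i)

section Topo

variable [TopologicalSpace X]

/-- Topological transitivity of an NDS. -/
def NDSTransitive (f : ℕ → X → X) : Prop :=
  ∀ U V : Set X, IsOpen U → U.Nonempty → IsOpen V → V.Nonempty →
    ∃ n : ℕ, 1 ≤ n ∧ (nComp f 0 n '' U ∩ V).Nonempty

/-- Multi-transitivity of an NDS. -/
def MultiTransitive (f : ℕ → X → X) : Prop :=
  ∀ m : ℕ, 1 ≤ m → ∀ U V : Fin m → Set X,
    (∀ i, IsOpen (U i)) → (∀ i, (U i).Nonempty) →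
    (∀ i, IsOpen (V i)) → (∀ i, (V i).Nonempty) →
    ∃ l : ℕ, 1 ≤ l ∧ ∀ i : Fin m, (nComp f 0 ((i.1 + 1) * l) '' U i ∩ V i).Nonempty

/-- Multi-transitivity of an NDS with respect to a vector `a`. -/
def MultiTransWrt (f : ℕ → X → X) {p : ℕ} (a : Fin p → ℕ) : Prop :=
  ∀ U V : Fin p → Set X,
    (∀ i, IsOpen (U i)) → (∀ i, (U i).Nonempty) →
    (∀ i, IsOpen (V i)) → (∀ i, (V i).Nonempty) →
    ∃ l : ℕ, 1 ≤ l ∧ ∀ i : Fin p, (nComp f 0 (a i * l) '' U i ∩ V i).Nonempty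

/-- Strong multi-transitivity of an NDS: multi-transitivity with respect to every
vector of positive integers. -/
def StronglyMultiTransitive (f : ℕ → X → X) : Prop :=
  ∀ p : ℕ, 1 ≤ p → ∀ a : Fin p → ℕ, (∀ i, 1 ≤ a i) → MultiTransWrt f a

/-- Weak mixing of order `n` of an NDS. -/
def WeaklyMixingOfOrder (f : ℕ → X → X) (n : ℕ) : Prop :=
  ∀ U V : Fin n → Set X,
    (∀ i, IsOpen (U i)) → (∀ i, (U i).Nonempty) →
    (∀ i, IsOpen (V i)) → (∀ i, (V i).Nonempty) →
    ∃ m : ℕ, 1 ≤ m ∧ ∀ i : Fin n, (nComp f 0 m '' U i ∩ V i).Nonempty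

/-- Weak mixing of all orders of an NDS. -/
def WeaklyMixingAllOrders (f : ℕ → X → X) : Prop :=
  ∀ n : ℕ, 2 ≤ n → WeaklyMixingOfOrder f n

/-- Mild mixing of an NDS: the product with any transitive NDS (on a compact
metric space, with continuous maps) is transitive. -/
def MildlyMixing (f : ℕ → X → X) : Prop :=
  ∀ (Y : Type) [MetricSpace Y] [CompactSpace Y] (g : ℕ → Y → Y),
    (∀ n, Continuous (g n)) → NDSTransitive g →
      NDSTransitive (fun n (p : X × Y) => (f n p.1, g n p.2))

/-- Δ-transitivity of an NDS. -/
def DeltaTransitive (f : ℕ → X → X) : Prop :=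
  ∀ m : ℕ, 1 ≤ m → ∃ Y : Set X, Dense Y ∧ IsGδ Y ∧
    ∀ x ∈ Y, Dense {y : Fin m → X | ∃ n : ℕ, 1 ≤ n ∧ y = fun i => nComp f 0 ((i.1 + 1) * n) x}

/-- Δ-mixing of an NDS. -/
def DeltaMixing (f : ℕ → X → X) : Prop :=
  ∀ m : ℕ, 1 ≤ m → ∀ A : Set ℕ, A.Infinite → 0 ∉ A →
    ∃ Y : Set X, Dense Y ∧ IsGδ Y ∧
      ∀ x ∈ Y, Dense {y : Fin m → X | ∃ n ∈ A, y = fun i => nComp f 0 ((i.1 + 1) * n) x}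

/-- The set `N_{f_{1,∞}}(U,V)` of (positive) hitting times. -/
def hitTimes (f : ℕ → X → X) (U V : Set X) : Set ℕ :=
  {n : ℕ | 1 ≤ n ∧ (nComp f 0 n '' U ∩ V).Nonempty}

/-- A set of positive integers is syndetic if it has bounded gaps. -/
def Syndetic (A : Set ℕ) : Prop :=
  ∃ M : ℕ, ∀ i : ℕ, 1 ≤ i → ∃ j ∈ A, i ≤ j ∧ j ≤ i + M

/-- A set of positive integers is thick if it contains arbitrarily long runs. -/
def ThickSet (A : Set ℕ) : Prop :=
  ∀ p : ℕ, ∃ n : ℕ, 1 ≤ n ∧ ∀ j ≤ p, n + j ∈ A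

/-- A set of positive integers is thickly syndetic. -/
def ThicklySyndetic (A : Set ℕ) : Prop :=
  ∀ l : ℕ, Syndetic {m : ℕ | ∀ j ≤ l, m + j ∈ A}

/-- Thick transitivity of an NDS. -/
def ThicklyTransitive (f : ℕ → X → X) : Prop :=
  ∀ U V : Set X, IsOpen U → U.Nonempty → IsOpen V → V.Nonempty →
    ThickSet (hitTimes f U V)

/-- Thickly syndetic transitivity of an NDS. -/
def ThicklySyndeticallyTransitive (f : ℕ → X → X) : Prop :=
  ∀ U V : Set X, IsOpen U → U.Nonempty → IsOpen V → V.Nonempty →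
    ThicklySyndetic (hitTimes f U V)

/-- Total transitivity of an NDS: every iterate `f^{[n]}` is transitive. -/
def TotallyTransitive (f : ℕ → X → X) : Prop :=
  ∀ n : ℕ, 1 ≤ n → NDSTransitive (iterNDS f n)

/-- An NDS is feeble open if each map sends nonempty open sets to sets with
nonempty interior. -/
def FeebleOpen (f : ℕ → X → X) : Prop :=
  ∀ i : ℕ, ∀ U : Set X, IsOpen U → U.Nonempty → (interior (f i '' U)).Nonempty

/-- Strong multi-transitivity of an autonomous system `(X, g)`. -/
def ADSStronglyMultiTransitive (g : X → X) : Prop :=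
  ∀ m : ℕ, 1 ≤ m → ∀ a : Fin m → ℕ, (∀ j, 1 ≤ a j) →
    ∀ U V : Fin m → Set X,
      (∀ j, IsOpen (U j)) → (∀ j, (U j).Nonempty) →
      (∀ j, IsOpen (V j)) → (∀ j, (V j).Nonempty) →
      ∃ l : ℕ, 1 ≤ l ∧ ∀ j : Fin m, (g^[a j * l] '' U j ∩ V j).Nonempty

/-- Δ-transitivity of an autonomous system `(X, g)`. -/
def ADSDeltaTransitive (g : X → X) : Prop :=
  ∀ m : ℕ, 1 ≤ m → ∃ Y : Set X, Dense Y ∧ IsGδ Y ∧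
    ∀ x ∈ Y, Dense {y : Fin m → X | ∃ n : ℕ, 1 ≤ n ∧ y = fun i => g^[(i.1 + 1) * n] x}

/-- Thickly syndetic transitivity of an autonomous system `(X, g)`. -/
def ADSThicklySyndeticallyTransitive (g : X → X) : Prop :=
  ∀ U V : Set X, IsOpen U → U.Nonempty → IsOpen V → V.Nonempty →
    ThicklySyndetic {n : ℕ | 1 ≤ n ∧ (g^[n] '' U ∩ V).Nonempty}

end Topo

section MetricDefs

variable [MetricSpace X]

/-- The compositions `f_r^k` converge collectively to the iterates `g^k`. -/
def CollectiveConvergence (f : ℕ → X → X) (g : X → X) : Prop :=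
  ∀ ε : ℝ, 0 < ε → ∃ r₀ : ℕ, ∀ r ≥ r₀, ∀ k : ℕ, 1 ≤ k → ∀ x : X,
    dist (nComp f r k x) (g^[k] x) < ε

/-- Chain mixing of an NDS. -/
def NDSChainMixing (f : ℕ → X → X) : Prop :=
  ∀ x y : X, ∀ δ : ℝ, 0 < δ → ∃ N : ℕ, 1 ≤ N ∧ ∀ n ≥ N,
    ∃ c : ℕ → X, c 0 = x ∧ c n = y ∧ ∀ i < n, dist (f i (c i)) (c (i + 1)) < δ

/-- Chain transitivity of an NDS. -/
def NDSChainTransitive (f : ℕ → X → X) : Prop :=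
  ∀ x y : X, ∀ δ : ℝ, 0 < δ → ∃ n : ℕ, 1 ≤ n ∧
    ∃ c : ℕ → X, c 0 = x ∧ c n = y ∧ ∀ i < n, dist (f i (c i)) (c (i + 1)) < δ

/-- The shadowing property of an NDS. -/
def NDSShadowing (f : ℕ → X → X) : Prop :=
  ∀ ε : ℝ, 0 < ε → ∃ δ : ℝ, 0 < δ ∧ ∀ n : ℕ, ∀ c : ℕ → X,
    (∀ i < n, dist (f i (c i)) (c (i + 1)) < δ) →
      ∃ z : X, ∀ i ≤ n, dist (nComp f 0 i z) (c i) < ε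

end MetricDefs

end NDSDefs

/-!
Since `(f^{[n]})₁^{il} = f₁^{(ni)l}`, multi-transitivity of `f^{[n]}` asks that `f` be
multi-transitive with respect to each vector `(n, 2n, …, mn)`. Such a vector consists of distinct
entries of the longer vector `(1, 2, …, mn)`; conversely a time `l` serving `(n, 2n, …, mn)` gives
the time `nl` serving `(1, 2, …, m)`.
-/

section Composition

variable {X : Type*} (f : ℕ → X → X)

theorem nComp_add (i a b : ℕ) : nComp f i (a + b) = nComp f (i + a) b ∘ nComp f i a := by
  induction b with
  | zero => rfl
  | succ b ih =>
    calc nComp f i (a + (b + 1))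
        = f (i + (a + b)) ∘ nComp f i (a + b) := rfl
      _ = f (i + a + b) ∘ nComp f (i + a) b ∘ nComp f i a := by rw [ih, Nat.add_assoc]
      _ = nComp f (i + a) (b + 1) ∘ nComp f i a := rfl

theorem nComp_iterNDS (n i k : ℕ) : nComp (iterNDS f n) i k = nComp f (n * i) (n * k) := by
  induction k with
  | zero => rfl
  | succ k ih =>
    calc nComp (iterNDS f n) i (k + 1)
        = nComp f (n * (i + k)) n ∘ nComp (iterNDS f n) i k := rfl
      _ = nComp f (n * i + n * k) n ∘ nComp f (n * i) (n * k) := by rw [ih, Nat.mul_add]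
      _ = nComp f (n * i) (n * (k + 1)) := by rw [← nComp_add, Nat.mul_succ]

end Composition

section MultiTransitivity

variable {X : Type*} [TopologicalSpace X] {f : ℕ → X → X}

theorem multiTransitive_iff_forall_multiTransWrt :
    MultiTransitive f ↔ ∀ m, 1 ≤ m → MultiTransWrt f fun i : Fin m => i.1 + 1 :=
  Iff.rfl

theorem multiTransWrt_iterNDS_iff {p : ℕ} {a : Fin p → ℕ} {n : ℕ} :
    MultiTransWrt (iterNDS f n) a ↔ MultiTransWrt f (n • a) := by
  simp only [MultiTransWrt, nComp_iterNDS, Nat.mul_zero, Pi.smul_apply, smul_eq_mul, Nat.mul_assoc]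

theorem MultiTransWrt.of_smul {p : ℕ} {a : Fin p → ℕ} {n : ℕ} (hn : 1 ≤ n)
    (h : MultiTransWrt f (n • a)) : MultiTransWrt f a := by
  intro U V hU hU' hV hV'
  obtain ⟨l, hl, hit⟩ := h U V hU hU' hV hV'
  refine ⟨n * l, Nat.mul_pos hn hl, fun i => ?_⟩
  simpa only [Pi.smul_apply, smul_eq_mul, Nat.mul_assoc, Nat.mul_left_comm] using hit i

theorem MultiTransWrt.comp_of_leftInverse {p q : ℕ} {a : Fin q → ℕ} {σ : Fin p → Fin q}
    {ρ : Fin q → Fin p} (h : MultiTransWrt f a) (hρ : Function.LeftInverse ρ σ) :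
    MultiTransWrt f (a ∘ σ) := by
  intro U V hU hU' hV hV'
  obtain ⟨l, hl, hit⟩ := h (U ∘ ρ) (V ∘ ρ) (fun _ => hU _) (fun _ => hU' _)
    (fun _ => hV _) (fun _ => hV' _)
  refine ⟨l, hl, fun i => ?_⟩
  simpa only [Function.comp_apply, hρ i] using hit (σ i)

theorem MultiTransitive.multiTransWrt_of_injective {p : ℕ} {a : Fin p → ℕ}
    (h : MultiTransitive f) (ha : Function.Injective a) (hpos : ∀ i, 1 ≤ a i) :
    MultiTransWrt f a := by
  rcases isEmpty_or_nonempty (Fin p) with hp | hp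
  · exact fun _ _ _ _ _ _ => ⟨1, le_rfl, isEmptyElim⟩
  have i₀ : Fin p := Classical.arbitrary _
  let M := Finset.univ.sup a
  have le_M (i : Fin p) : a i ≤ M := Finset.le_sup (Finset.mem_univ i)
  let σ : Fin p → Fin M := fun i => ⟨a i - 1, Nat.sub_one_lt_of_le (hpos i) (le_M i)⟩
  have a_eq : (fun j : Fin M => j.1 + 1) ∘ σ = a := funext fun i => Nat.sub_add_cancel (hpos i)
  have σ_inj : Function.Injective σ := .of_comp (a_eq ▸ ha)
  rw [← a_eq]
  exact (multiTransitive_iff_forall_multiTransWrt.mp h M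
    ((hpos i₀).trans (le_M i₀))).comp_of_leftInverse (Function.leftInverse_invFun σ_inj)

end MultiTransitivity

theorem multiTransitive_iff_iterate_general {X : Type*} [TopologicalSpace X]
    (f : ℕ → X → X) (n : ℕ) (hn : 1 ≤ n) :
    MultiTransitive f ↔ MultiTransitive (iterNDS f n) := by
  simp only [multiTransitive_iff_forall_multiTransWrt (f := iterNDS f n),
    multiTransWrt_iterNDS_iff]
  constructor
  · intro h m _
    have smul_injective : Function.Injective (n • fun i : Fin m => i.1 + 1) := fun i j hij =>
      Fin.ext (Nat.succ_injective (Nat.eq_of_mul_eq_mul_left hn hij))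
    exact h.multiTransWrt_of_injective smul_injective fun i => Nat.mul_pos hn i.1.succ_pos
  · exact fun h m hm => (h m hm).of_smul hn

/-- an NDS is multi-transitive iff its `n`-th iterate is multi-transitive. -/
theorem multiTransitive_iff_iterate {X : Type*} [MetricSpace X] [CompactSpace X]
    (f : ℕ → X → X) (hf : ∀ n, Continuous (f n)) (n : ℕ) (hn : 1 ≤ n) :
    MultiTransitive f ↔ MultiTransitive (iterNDS f n) :=
  multiTransitive_iff_iterate_general f n hn
end

section
/- Let (X, f_{1,∞}) be an NDS. If f_{1,∞} is strongly multi-transitive, then for every m ∈ ℕ, every vector a = (a_1,…,a_m) ∈ ℕ^m and every collection of nonempty open subsets U_1,…,U_m, V_1,…,V_m of X, the set {l ∈ ℕ : f_1^{l a_j}(U_j) ∩ V_j ≠ ∅ for all j = 1,…,m} is infinite. -/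
open Set Filter

/-!
Multi-transitivity with respect to `k • a` produces a time `l ≥ 1` for the vector `k • a`, and
`(k * l) * a j = l * (k * a j)`, so `k * l ≥ k` is a time for `a`. Letting `k` grow gives
arbitrarily large times for `a`.
-/

section CommonHitTimes

variable {X ι : Type*} {f : ℕ → X → X}

/-- The times `l ≥ 1` at which `f₁^{l aⱼ}(Uⱼ)` meets `Vⱼ` for all `j` simultaneously; the
version of `hitTimes` for a vector `a` and families `U`, `V`. -/
def commonHitTimes (f : ℕ → X → X) (a : ι → ℕ) (U V : ι → Set X) : Set ℕ :=
  {l : ℕ | 1 ≤ l ∧ ∀ j, (nComp f 0 (l * a j) '' U j ∩ V j).Nonempty}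

theorem mul_mem_commonHitTimes_iff {a : ι → ℕ} {U V : ι → Set X} {k l : ℕ} (hk : 0 < k) :
    k * l ∈ commonHitTimes f a U V ↔ l ∈ commonHitTimes f (k • a) U V := by
  have one_le_mul_iff : 1 ≤ k * l ↔ 1 ≤ l := Nat.mul_pos_iff_of_pos_left hk
  simp only [commonHitTimes, mem_ofPred_eq, Pi.smul_apply, smul_eq_mul, one_le_mul_iff,
    mul_left_comm l k, mul_assoc]

variable [TopologicalSpace X] {p : ℕ} {a : Fin p → ℕ} {U V : Fin p → Set X}

theorem MultiTransWrt.commonHitTimes_nonempty (h : MultiTransWrt f a)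
    (hU : ∀ j, IsOpen (U j)) (hUne : ∀ j, (U j).Nonempty)
    (hV : ∀ j, IsOpen (V j)) (hVne : ∀ j, (V j).Nonempty) :
    (commonHitTimes f a U V).Nonempty := by
  obtain ⟨l, hl, hit⟩ := h U V hU hUne hV hVne
  exact ⟨l, hl, fun j => mul_comm (a j) l ▸ hit j⟩

theorem stronglyMultiTransitive_infinite_times_general
    (h : ∃ᶠ k : ℕ in atTop, MultiTransWrt f (k • a))
    (hU : ∀ j, IsOpen (U j)) (hUne : ∀ j, (U j).Nonempty)
    (hV : ∀ j, IsOpen (V j)) (hVne : ∀ j, (V j).Nonempty) :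
    (commonHitTimes f a U V).Infinite := by
  refine infinite_of_forall_exists_gt fun n => ?_
  obtain ⟨k, hnk, hk⟩ := frequently_atTop'.mp h n
  obtain ⟨l, hl⟩ := hk.commonHitTimes_nonempty hU hUne hV hVne
  exact ⟨k * l, (mul_mem_commonHitTimes_iff (Nat.zero_lt_of_lt hnk)).mpr hl,
    hnk.trans_le (Nat.le_mul_of_pos_right k hl.1)⟩

end CommonHitTimes

/-- if an NDS is strongly multi-transitive, then the set of `l` with
`f₁^{l aⱼ}(Uⱼ) ∩ Vⱼ ≠ ∅` for all `j` is infinite. -/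
theorem stronglyMultiTransitive_infinite_times {X : Type*} [MetricSpace X] [CompactSpace X]
    (f : ℕ → X → X) (hf : ∀ n, Continuous (f n))
    (h : StronglyMultiTransitive f)
    (m : ℕ) (hm : 1 ≤ m) (a : Fin m → ℕ) (ha : ∀ j, 1 ≤ a j)
    (U V : Fin m → Set X)
    (hU : ∀ j, IsOpen (U j)) (hUne : ∀ j, (U j).Nonempty)
    (hV : ∀ j, IsOpen (V j)) (hVne : ∀ j, (V j).Nonempty) :
    {l : ℕ | 1 ≤ l ∧ ∀ j : Fin m, (nComp f 0 (l * a j) '' U j ∩ V j).Nonempty}.Infinite :=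
  stronglyMultiTransitive_infinite_times_general ((eventually_gt_atTop 0).frequently.mono
    fun k hk => h m hm (k • a) fun j => Nat.mul_pos hk (ha j)) hU hUne hV hVne
end

section
/- Let (X, f_{1,∞}) be an NDS, m ∈ ℕ and A ⊆ ℕ an infinite set. Then the following are equivalent: (1) for all nonempty open sets U_0, U_1, …, U_m ⊆ X there exists n ∈ A such that ⋂_{i=0}^{m} (f_1^{in})^{-1}(U_i) ≠ ∅; (2) there exists a dense Gδ set Y ⊆ X such that for every x ∈ Y the set {(f_1^n(x), f_1^{2n}(x), …, f_1^{mn}(x)) : n ∈ A} is dense in X^m. -/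
open Set Filter

/-!
With `Φₙ x = (f₁ⁿ x, f₁²ⁿ x, …, f₁ᵐⁿ x)`, the statement is Birkhoff's transitivity theorem for the
family of maps `Φₙ : X → Xᵐ`, `n ∈ A`. The points `x` with `{Φₙ x}` dense form the set
`⋂ V, ⋃ n, Φₙ⁻¹ V`, where `V` runs through a countable basis of `Xᵐ`; by Baire's theorem this
`Gδ` set is dense once each `⋃ n, Φₙ⁻¹ V` is, which says that every nonempty open `U ⊆ X` meets
some `Φₙ⁻¹ V`. It suffices to test the latter on boxes `V = U₁ × ⋯ × Uₘ`, and then with `U = U₀`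
it is the open-set condition.
-/

open TopologicalSpace

section Universality

variable {ι X Z : Type*} [TopologicalSpace Z] {φ : ι → X → Z}

/-- The universal points of a family of maps `φ i : X → Z`, i.e. the points whose orbit
`{φ i x | i}` is dense in `Z`. -/
def universalPoints (φ : ι → X → Z) : Set X :=
  {x | DenseRange fun i => φ i x}

theorem universalPoints_eq_biInter {B : Set (Set Z)} (hB : IsTopologicalBasis B) (hB₀ : ∅ ∉ B) :
    universalPoints φ = ⋂ V ∈ B, ⋃ i, φ i ⁻¹' V := by
  ext x
  have hne : ∀ V ∈ B, V.Nonempty := fun V hV =>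
    nonempty_iff_ne_empty.2 fun h => hB₀ (h ▸ hV)
  simp +contextual [universalPoints, DenseRange, hB.dense_iff, hne, inter_nonempty]

variable [TopologicalSpace X]

/-- Topological transitivity of a family of maps between two possibly different spaces: every
nonempty open set of the domain is moved by some member of the family so as to meet any given
nonempty open set of the codomain. -/
def TransitiveFamily (φ : ι → X → Z) : Prop :=
  ∀ (U : Set X) (V : Set Z), IsOpen U → U.Nonempty → IsOpen V → V.Nonempty →
    ∃ i, (U ∩ φ i ⁻¹' V).Nonempty

theorem transitiveFamily_of_dense_universalPoints (h : Dense (universalPoints φ)) :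
    TransitiveFamily φ := by
  intro U V hU hU₀ hV hV₀
  obtain ⟨x, hxU, hx⟩ := h.inter_open_nonempty U hU hU₀
  obtain ⟨i, hi⟩ := DenseRange.exists_mem_open hx hV hV₀
  exact ⟨i, x, hxU, hi⟩

theorem TransitiveFamily.dense_iUnion_preimage (h : TransitiveFamily φ) {V : Set Z}
    (hV : IsOpen V) (hV₀ : V.Nonempty) : Dense (⋃ i, φ i ⁻¹' V) := by
  refine dense_iff_inter_open.2 fun U hU hU₀ => ?_
  obtain ⟨i, hi⟩ := h U V hU hU₀ hV hV₀
  exact hi.mono (inter_subset_inter_right U (subset_iUnion (fun i => φ i ⁻¹' V) i))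

variable [SecondCountableTopology Z]

theorem isGδ_universalPoints (hφ : ∀ i, Continuous (φ i)) : IsGδ (universalPoints φ) := by
  rw [universalPoints_eq_biInter (isBasis_countableBasis Z) (empty_notMem_countableBasis Z)]
  exact .biInter_of_isOpen (countable_countableBasis Z) fun V hV =>
    isOpen_iUnion fun i => (isOpen_of_mem_countableBasis hV).preimage (hφ i)

theorem dense_universalPoints_iff_transitiveFamily [BaireSpace X] (hφ : ∀ i, Continuous (φ i)) :
    Dense (universalPoints φ) ↔ TransitiveFamily φ := by
  refine ⟨transitiveFamily_of_dense_universalPoints, fun h => ?_⟩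
  rw [universalPoints_eq_biInter (isBasis_countableBasis Z) (empty_notMem_countableBasis Z)]
  exact dense_biInter_of_isOpen
    (fun V hV => isOpen_iUnion fun i => (isOpen_of_mem_countableBasis hV).preimage (hφ i))
    (countable_countableBasis Z)
    fun V hV => h.dense_iUnion_preimage (isOpen_of_mem_countableBasis hV)
      (nonempty_of_mem_countableBasis hV)

theorem dense_universalPoints_iff_exists_isGδ (hφ : ∀ i, Continuous (φ i)) :
    Dense (universalPoints φ) ↔
      ∃ Y : Set X, Dense Y ∧ IsGδ Y ∧ ∀ x ∈ Y, DenseRange fun i => φ i x :=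
  ⟨fun h => ⟨_, h, isGδ_universalPoints hφ, fun _ hx => hx⟩,
    fun ⟨_, hY, _, hYφ⟩ => hY.mono hYφ⟩

end Universality

theorem transitiveFamily_pi_iff {ι X κ : Type*} [TopologicalSpace X] [Finite κ] {Z : κ → Type*}
    [∀ j, TopologicalSpace (Z j)] {φ : ι → X → ∀ j, Z j} :
    TransitiveFamily φ ↔ ∀ (U : Set X) (W : ∀ j, Set (Z j)), IsOpen U →
      (∀ j, IsOpen (W j)) → U.Nonempty → (∀ j, (W j).Nonempty) →
        ∃ i, (U ∩ φ i ⁻¹' univ.pi W).Nonempty := by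
  refine ⟨fun h U W hU hW hU₀ hW₀ => h U _ hU hU₀ (isOpen_set_pi finite_univ fun j _ => hW j)
    (univ_pi_nonempty_iff.2 hW₀), fun h U V hU hU₀ hV hV₀ => ?_⟩
  obtain ⟨z, hz⟩ := hV₀
  obtain ⟨W, hW, hWV⟩ := isOpen_pi_iff'.1 hV z hz
  obtain ⟨i, hi⟩ := h U W hU (fun j => (hW j).1) hU₀ fun j => ⟨z j, (hW j).2⟩
  exact ⟨i, hi.mono (inter_subset_inter_right U (preimage_mono hWV))⟩

section MultiOrbit

variable {X : Type*}

/-- The map `x ↦ (f₁ⁿ x, f₁²ⁿ x, …, f₁ᵐⁿ x)`; the coordinates are indexed from `0`, so the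
`i`-th one is `f₁⁽ⁱ⁺¹⁾ⁿ x`. -/
def multiOrbit (f : ℕ → X → X) (m n : ℕ) (x : X) : Fin m → X :=
  fun i => nComp f 0 ((i.1 + 1) * n) x

theorem iInter_preimage_nComp_eq (f : ℕ → X → X) {m : ℕ} (n : ℕ) (U : Fin (m + 1) → Set X) :
    ⋂ i : Fin (m + 1), nComp f 0 (i.1 * n) ⁻¹' U i =
      U 0 ∩ multiOrbit f m n ⁻¹' univ.pi (Fin.tail U) := by
  ext x
  simp [Fin.forall_fin_succ, multiOrbit, Fin.tail, nComp]

theorem range_multiOrbit (f : ℕ → X → X) (m : ℕ) (A : Set ℕ) (x : X) :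
    range (fun n : A => multiOrbit f m n x) =
      {y | ∃ n ∈ A, y = fun i => nComp f 0 ((i.1 + 1) * n) x} := by
  ext y
  simp only [mem_range, Subtype.exists, exists_prop, mem_ofPred_eq, eq_comm (b := y), multiOrbit,
    funext_iff]

variable [TopologicalSpace X] {f : ℕ → X → X}

theorem continuous_nComp (hf : ∀ n, Continuous (f n)) (i n : ℕ) : Continuous (nComp f i n) := by
  induction n with
  | zero => exact continuous_id
  | succ n ih => exact (hf (i + n)).comp ih

theorem continuous_multiOrbit (hf : ∀ n, Continuous (f n)) (m n : ℕ) :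
    Continuous (multiOrbit f m n) :=
  continuous_pi fun _ => continuous_nComp hf 0 _

theorem transitiveFamily_multiOrbit_iff (f : ℕ → X → X) (m : ℕ) (A : Set ℕ) :
    TransitiveFamily (fun n : A => multiOrbit f m n) ↔
      ∀ U : Fin (m + 1) → Set X, (∀ i, IsOpen (U i)) → (∀ i, (U i).Nonempty) →
        ∃ n ∈ A, (⋂ i : Fin (m + 1), nComp f 0 (i.1 * n) ⁻¹' U i).Nonempty := by
  simp only [transitiveFamily_pi_iff, iInter_preimage_nComp_eq, Fin.forall_fin_succ_pi,
    Fin.forall_fin_succ, Fin.cons_zero, Fin.cons_succ, Fin.tail_cons, Subtype.exists,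
    exists_prop, and_imp]

end MultiOrbit

theorem delta_dense_Gdelta_iff_general {X : Type*} [TopologicalSpace X] [BaireSpace X]
    [SecondCountableTopology X] (f : ℕ → X → X) (hf : ∀ n, Continuous (f n))
    (m : ℕ) (A : Set ℕ) :
    (∀ U : Fin (m + 1) → Set X, (∀ i, IsOpen (U i)) → (∀ i, (U i).Nonempty) →
        ∃ n ∈ A, (⋂ i : Fin (m + 1), nComp f 0 (i.1 * n) ⁻¹' U i).Nonempty) ↔
      (∃ Y : Set X, Dense Y ∧ IsGδ Y ∧ ∀ x ∈ Y,
        Dense {y : Fin m → X | ∃ n ∈ A, y = fun i => nComp f 0 ((i.1 + 1) * n) x}) := by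
  have hcont : ∀ n : A, Continuous (multiOrbit f m n) := fun n => continuous_multiOrbit hf m n
  simp only [← range_multiOrbit]
  calc
    _ ↔ TransitiveFamily fun n : A => multiOrbit f m n :=
      (transitiveFamily_multiOrbit_iff f m A).symm
    _ ↔ Dense (universalPoints fun n : A => multiOrbit f m n) :=
      (dense_universalPoints_iff_transitiveFamily hcont).symm
    _ ↔ _ := dense_universalPoints_iff_exists_isGδ hcont

/-- equivalence between the open-set condition along an infinite set `A`
and the existence of a dense Gδ set of points with dense Δ-orbits along `A`. -/
theorem delta_dense_Gdelta_iff {X : Type*} [MetricSpace X] [CompactSpace X]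
    (f : ℕ → X → X) (hf : ∀ n, Continuous (f n))
    (m : ℕ) (hm : 1 ≤ m) (A : Set ℕ) (hA : A.Infinite) (hA0 : 0 ∉ A) :
    (∀ U : Fin (m + 1) → Set X, (∀ i, IsOpen (U i)) → (∀ i, (U i).Nonempty) →
        ∃ n ∈ A, (⋂ i : Fin (m + 1), nComp f 0 (i.1 * n) ⁻¹' U i).Nonempty) ↔
      (∃ Y : Set X, Dense Y ∧ IsGδ Y ∧ ∀ x ∈ Y,
        Dense {y : Fin m → X | ∃ n ∈ A, y = fun i => nComp f 0 ((i.1 + 1) * n) x}) :=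
  delta_dense_Gdelta_iff_general f hf m A
end

section
/- Let (X, f_{1,∞}) and (Y, g_{1,∞}) be NDS such that f_{1,∞} is topologically semi-conjugate to g_{1,∞} via a continuous surjection h : X → Y with g_n ∘ h = h ∘ f_n for every n ∈ ℕ. If f_{1,∞} is strongly multi-transitive, then g_{1,∞} is strongly multi-transitive. -/
open Set Filter

section Semiconj

variable {X Y : Type*} {f : ℕ → X → X} {g : ℕ → Y → Y} {h : X → Y}

theorem nComp_semiconj (hfg : ∀ n, Function.Semiconj h (f n) (g n)) (i n : ℕ) :
    Function.Semiconj h (nComp f i n) (nComp g i n) := by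
  induction n with
  | zero => exact Function.Semiconj.id_right
  | succ n ih => exact (hfg (i + n)).comp_right ih

theorem image_inter_nonempty_of_semiconj {F : X → X} {G : Y → Y} (hFG : Function.Semiconj h F G)
    {U V : Set Y} (hUV : (F '' (h ⁻¹' U) ∩ h ⁻¹' V).Nonempty) : (G '' U ∩ V).Nonempty := by
  obtain ⟨_, ⟨x, hxU, rfl⟩, hxV⟩ := hUV
  exact ⟨h (F x), ⟨h x, hxU, (hFG x).symm⟩, hxV⟩

variable [TopologicalSpace X] [TopologicalSpace Y]

theorem MultiTransWrt.of_semiconj {p : ℕ} {a : Fin p → ℕ} (hf : MultiTransWrt f a)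
    (hc : Continuous h) (hs : Function.Surjective h)
    (hfg : ∀ n, Function.Semiconj h (f n) (g n)) : MultiTransWrt g a := by
  intro U V hUo hUne hVo hVne
  obtain ⟨l, hl, hit⟩ := hf (fun i => h ⁻¹' U i) (fun i => h ⁻¹' V i)
    (fun i => (hUo i).preimage hc) (fun i => (hUne i).preimage hs)
    (fun i => (hVo i).preimage hc) (fun i => (hVne i).preimage hs)
  exact ⟨l, hl, fun i =>
    image_inter_nonempty_of_semiconj (nComp_semiconj hfg 0 (a i * l)) (hit i)⟩

theorem semiconj_stronglyMultiTransitive_general (hc : Continuous h) (hs : Function.Surjective h)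
    (hfg : ∀ n, Function.Semiconj h (f n) (g n)) (hf : StronglyMultiTransitive f) :
    StronglyMultiTransitive g :=
  fun p hp a ha => (hf p hp a ha).of_semiconj hc hs hfg

end Semiconj

/-- strong multi-transitivity is preserved by topological semi-conjugacy. -/
theorem semiconj_stronglyMultiTransitive {X : Type*} [MetricSpace X] [CompactSpace X]
    {Y : Type*} [MetricSpace Y] [CompactSpace Y]
    (f : ℕ → X → X) (hf : ∀ n, Continuous (f n))
    (g : ℕ → Y → Y) (hg : ∀ n, Continuous (g n))
    (h : X → Y) (hc : Continuous h) (hs : Function.Surjective h)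
    (hsemi : ∀ n : ℕ, ∀ x : X, g n (h x) = h (f n x))
    (hfmt : StronglyMultiTransitive f) : StronglyMultiTransitive g :=
  semiconj_stronglyMultiTransitive_general hc hs (fun n x => (hsemi n x).symm) hfmt
end
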